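/- Suppose there exist n+1 mutually unbiased orthonormal bases B_a = {v_{a,b}} of ℂ^n and an affine plane of order n. Then there is an orthonormal basis {ψ_f : f ∈ S} of ℂ^n ⊗ ℂ^n indexed by a set S of n² functions f : {0,…,n} → {1,…,n} with the property that for all 0 ≤ a ≤ n, 1 ≤ b ≤ n, and f ∈ S: if ⟨v_{a,b} ⊗ conj(v_{a,b}), ψ_f⟩ ≠ 0 then f(a) = b. (Hence Alice, after observing the outcome f of a von Neumann measurement of the post-measurement state v_{a,b} ⊗ conj(v_{a,b}) in this basis, can answer b = f(a) with certainty once a is revealed.) -/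

import Mathlib

open scoped ComplexInnerProductSpace ComplexConjugate BigOperators

/-- The tensor product `x ⊗ conj x'` of a vector with the componentwise conjugate of
another vector, viewed as a vector of `ℂ^n ⊗ ℂ^n ≅ ℂ^{n²}`. -/
noncomputable def tensConj {n : ℕ} (x x' : EuclideanSpace ℂ (Fin n)) :
    EuclideanSpace ℂ (Fin n × Fin n) :=
  WithLp.toLp 2 fun p => x p.1 * conj (x' p.2)
/-- The state `φ = (1/√n) Σ_b v_b ⊗ conj v_b` built from a basis `v`. -/
noncomputable def meState {n : ℕ} (v : Fin n → EuclideanSpace ℂ (Fin n)) :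
    EuclideanSpace ℂ (Fin n × Fin n) :=
  ((Real.sqrt n : ℂ))⁻¹ • ∑ b : Fin n, tensConj (v b) (v b)

/-- The state `ψ_f = -φ + γ_f` where `φ = (1/√n) Σ_b v_{0,b} ⊗ conj v_{0,b}` and
`γ_f = (1/√n) Σ_a v_{a,f(a)} ⊗ conj v_{a,f(a)}`. -/
noncomputable def psiState {n : ℕ} (v : Fin (n + 1) → Fin n → EuclideanSpace ℂ (Fin n))
    (f : Fin (n + 1) → Fin n) : EuclideanSpace ℂ (Fin n × Fin n) :=
  -meState (v 0) +
    ((Real.sqrt n : ℂ))⁻¹ • ∑ a : Fin (n + 1), tensConj (v a (f a)) (v a (f a))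

/-- An affine plane of order `n`, presented through its `n+1` parallel classes
`L 0, …, L n` of lines on the point set `Fin n × Fin n` (an `(n², n²+n, n+1, n, 1)` design). -/
structure IsAffinePlane (n : ℕ) (L : Fin (n + 1) → Finset (Finset (Fin n × Fin n))) :
    Prop where
  card_class : ∀ i, (L i).card = n
  card_line : ∀ i, ∀ ℓ ∈ L i, ℓ.card = n
  parallel_disjoint : ∀ i, ∀ ℓ ∈ L i, ∀ ℓ' ∈ L i, ℓ ≠ ℓ' → ℓ ∩ ℓ' = ∅
  class_cover : ∀ i, ∀ p : Fin n × Fin n, ∃ ℓ ∈ L i, p ∈ ℓ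
  classes_disjoint : ∀ i j, i ≠ j → ∀ ℓ ∈ L i, ℓ ∉ L j
  unique_line : ∀ p q : Fin n × Fin n, p ≠ q →
    ∃! ℓ : Finset (Fin n × Fin n), (∃ i, ℓ ∈ L i) ∧ p ∈ ℓ ∧ q ∈ ℓ

/-!
Let `w a b = v a b ⊗ conj (v a b)`. Parseval's identity gives `⟪w a b, φ⟫ = 1/√n` for every basis
vector, whatever basis `φ` is built from. Unbiasedness gives `⟪w a b, γ_f⟫ = ([f a = b] + 1)/√n`,
the `1` being the contribution `n · (1/n)` of the other `n` bases. Hence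
`⟪w a b, ψ_f⟫ = [f a = b]/√n`, and expanding `ψ_g` shows `⟪ψ_g, ψ_f⟫ = (#{a | f a = g a} - 1)/n`.
So `ψ_f` is a unit vector, and `ψ_f ⟂ ψ_g` when `f` and `g` agree at exactly one argument. A point
`p` of the affine plane defines the function sending a parallel class to the index of its line
through `p`; two distinct points lie on exactly one common line, so their functions agree exactly
once.
-/

section OrthonormalBasis

variable {𝕜 E ι : Type*} [RCLike 𝕜] [NormedAddCommGroup E] [InnerProductSpace 𝕜 E]
  [FiniteDimensional 𝕜 E] [Fintype ι]

lemma exists_orthonormalBasis_coe_eq {u : ι → E} (hu : Orthonormal 𝕜 u)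
    (hcard : Fintype.card ι = Module.finrank 𝕜 E) :
    ∃ ob : OrthonormalBasis ι 𝕜 E, ⇑ob = u :=
  ⟨.mk hu (hu.linearIndependent.span_eq_top_of_card_eq_finrank' hcard).ge,
    OrthonormalBasis.coe_mk _ _⟩

end OrthonormalBasis

section TensConj

variable {n : ℕ}

lemma inner_tensConj_tensConj (x x' y y' : EuclideanSpace ℂ (Fin n)) :
    ⟪tensConj x x', tensConj y y'⟫ = ⟪x, y⟫ * ⟪y', x'⟫ := by
  simp only [PiLp.inner_apply, tensConj, RCLike.inner_apply, Finset.sum_mul_sum,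
    Fintype.sum_prod_type, map_mul, Complex.conj_conj]
  refine Finset.sum_congr rfl fun i _ => Finset.sum_congr rfl fun j _ => ?_
  ring

lemma inner_tensConj_self_tensConj_self (x y : EuclideanSpace ℂ (Fin n)) :
    ⟪tensConj x x, tensConj y y⟫ = (‖⟪x, y⟫‖ : ℂ) ^ 2 := by
  rw [inner_tensConj_tensConj, ← inner_conj_symm y x, Complex.mul_conj']

lemma inner_tensConj_meState {u : Fin n → EuclideanSpace ℂ (Fin n)} (hu : Orthonormal ℂ u)
    (x x' : EuclideanSpace ℂ (Fin n)) :
    ⟪tensConj x x', meState u⟫ = (Real.sqrt n : ℂ)⁻¹ * ⟪x, x'⟫ := by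
  obtain ⟨ob, rfl⟩ := exists_orthonormalBasis_coe_eq hu (by simp)
  rw [meState, inner_smul_right, inner_sum]
  simp only [inner_tensConj_tensConj, ob.sum_inner_mul_inner]

end TensConj

section MutuallyUnbiased

variable {n : ℕ} {v : Fin (n + 1) → Fin n → EuclideanSpace ℂ (Fin n)}
  (horth : ∀ a, Orthonormal ℂ (v a))
  (hmub : ∀ a a', a ≠ a' → ∀ b b', ‖⟪v a b, v a' b'⟫‖ ^ 2 = 1 / n)

include horth hmub

lemma inner_tensConj_sum_tensConj (a : Fin (n + 1)) (b : Fin n) (f : Fin (n + 1) → Fin n) :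
    ⟪tensConj (v a b) (v a b), ∑ a', tensConj (v a' (f a')) (v a' (f a'))⟫
      = (if f a = b then 1 else 0) + 1 := by
  have hn : (n : ℂ) ≠ 0 := Nat.cast_ne_zero.2 b.pos.ne'
  have same_basis : ⟪tensConj (v a b) (v a b), tensConj (v a (f a)) (v a (f a))⟫
      = if f a = b then 1 else 0 := by
    rw [inner_tensConj_self_tensConj_self, orthonormal_iff_ite.1 (horth a)]
    split_ifs <;> simp_all
  have other_basis : ∀ a' ∈ ({a}ᶜ : Finset (Fin (n + 1))),
      ⟪tensConj (v a b) (v a b), tensConj (v a' (f a')) (v a' (f a'))⟫ = (n : ℂ)⁻¹ := by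
    intro a' ha'
    have hne : a ≠ a' := by simpa [eq_comm] using ha'
    rw [inner_tensConj_self_tensConj_self, ← Complex.ofReal_pow, hmub a a' hne, one_div,
      Complex.ofReal_inv, Complex.ofReal_natCast]
  rw [inner_sum, Fintype.sum_eq_add_sum_compl a, same_basis, Finset.sum_congr rfl other_basis]
  simp [Finset.card_compl, hn]

lemma inner_tensConj_psiState (a : Fin (n + 1)) (b : Fin n) (f : Fin (n + 1) → Fin n) :
    ⟪tensConj (v a b) (v a b), psiState v f⟫
      = (Real.sqrt n : ℂ)⁻¹ * if f a = b then 1 else 0 := by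
  have hunit : ⟪v a b, v a b⟫ = 1 := inner_self_eq_one_of_norm_eq_one ((horth a).norm_eq_one b)
  rw [psiState, inner_add_right, inner_neg_right, inner_smul_right,
    inner_tensConj_meState (horth 0), inner_tensConj_sum_tensConj horth hmub, hunit]
  ring

lemma inner_psiState_psiState (g f : Fin (n + 1) → Fin n) :
    ⟪psiState v g, psiState v f⟫
      = (n : ℂ)⁻¹ * ((Finset.univ.filter fun a => f a = g a).card - 1) := by
  have hsqrt : (n : ℂ)⁻¹ = (Real.sqrt n : ℂ)⁻¹ * (Real.sqrt n : ℂ)⁻¹ := by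
    rw [← mul_inv, ← Complex.ofReal_mul, Real.mul_self_sqrt n.cast_nonneg, Complex.ofReal_natCast]
  have hphi : ⟪meState (v 0), psiState v f⟫ = (n : ℂ)⁻¹ := by
    rw [meState, inner_smul_left, sum_inner]
    simp [inner_tensConj_psiState horth hmub, hsqrt]
  have hgamma : ⟪(Real.sqrt n : ℂ)⁻¹ • ∑ a, tensConj (v a (g a)) (v a (g a)), psiState v f⟫
      = (n : ℂ)⁻¹ * (Finset.univ.filter fun a => f a = g a).card := by
    rw [inner_smul_left, sum_inner]
    simp only [inner_tensConj_psiState horth hmub, ← Finset.mul_sum, Finset.sum_boole, map_inv₀,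
      Complex.conj_ofReal, hsqrt, mul_assoc]
  rw [psiState, inner_add_left, inner_neg_left, hphi, hgamma]
  ring

lemma orthonormal_psiState {ι : Type*} {F : ι → Fin (n + 1) → Fin n}
    (hF : Pairwise fun i j => ∃! a, F i a = F j a) :
    Orthonormal ℂ fun i => psiState v (F i) := by
  classical
  rw [orthonormal_iff_ite]
  intro i j
  rw [inner_psiState_psiState horth hmub]
  split_ifs with hij
  · have hn : (n : ℂ) ≠ 0 := Nat.cast_ne_zero.2 (F i 0).pos.ne'
    simp [hij, hn]
  · simp [Fintype.existsUnique_iff_card_one _ |>.1 (hF (Ne.symm hij))]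

end MutuallyUnbiased

namespace IsAffinePlane

variable {n : ℕ} {L : Fin (n + 1) → Finset (Finset (Fin n × Fin n))}

lemma eq_of_mem_of_mem (hL : IsAffinePlane n L) {i : Fin (n + 1)}
    {ℓ ℓ' : Finset (Fin n × Fin n)} (hℓ : ℓ ∈ L i) (hℓ' : ℓ' ∈ L i)
    {p : Fin n × Fin n} (hp : p ∈ ℓ) (hp' : p ∈ ℓ') : ℓ = ℓ' := by
  by_contra hne
  have hmem : p ∈ ℓ ∩ ℓ' := Finset.mem_inter.2 ⟨hp, hp'⟩
  simp [hL.parallel_disjoint i ℓ hℓ ℓ' hℓ' hne] at hmem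

lemma existsUnique_class_of_ne (hL : IsAffinePlane n L) {p q : Fin n × Fin n} (hpq : p ≠ q) :
    ∃! i, ∃ ℓ ∈ L i, p ∈ ℓ ∧ q ∈ ℓ := by
  obtain ⟨m, ⟨⟨i, hm⟩, hmem⟩, huniq⟩ := hL.unique_line p q hpq
  refine ⟨i, ⟨m, hm, hmem⟩, ?_⟩
  rintro j ⟨ℓ, hℓ, hℓmem⟩
  obtain rfl : ℓ = m := huniq ℓ ⟨⟨j, hℓ⟩, hℓmem⟩
  by_contra hji
  exact hL.classes_disjoint j i hji ℓ hℓ hm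

lemma exists_lineIndex (hL : IsAffinePlane n L) :
    ∃ F : Fin n × Fin n → Fin (n + 1) → Fin n,
      ∀ p q i, F p i = F q i ↔ ∃ ℓ ∈ L i, p ∈ ℓ ∧ q ∈ ℓ := by
  choose line line_mem mem_line using hL.class_cover
  let index i := Finset.equivFinOfCardEq (hL.card_class i)
  refine ⟨fun p i => index i ⟨line i p, line_mem i p⟩, fun p q i => ?_⟩
  rw [(index i).injective.eq_iff, Subtype.mk.injEq]
  constructor
  · intro heq
    exact ⟨line i p, line_mem i p, mem_line i p, heq ▸ mem_line i q⟩
  · rintro ⟨ℓ, hℓ, hp, hq⟩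
    exact (hL.eq_of_mem_of_mem (line_mem i p) hℓ (mem_line i p) hp).trans
      (hL.eq_of_mem_of_mem hℓ (line_mem i q) hq (mem_line i q))

lemma exists_finset_pairwise_existsUnique_eq (hL : IsAffinePlane n L) :
    ∃ S : Finset (Fin (n + 1) → Fin n), S.card = n ^ 2 ∧
      (S : Set (Fin (n + 1) → Fin n)).Pairwise fun f g => ∃! a, f a = g a := by
  obtain ⟨F, hF⟩ := hL.exists_lineIndex
  have hagree {p q : Fin n × Fin n} (hpq : p ≠ q) : ∃! i, F p i = F q i := by
    simpa only [hF] using hL.existsUnique_class_of_ne hpq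
  have hinj : Function.Injective F := by
    intro p q hFpq
    by_contra hpq
    have : NeZero n := ⟨p.1.pos.ne'⟩
    have hzero_eq_last : (0 : Fin (n + 1)) = Fin.last n :=
      (hagree hpq).unique (congrFun hFpq 0) (congrFun hFpq (Fin.last n))
    exact (Fin.last_pos' (n := n)).ne hzero_eq_last
  refine ⟨Finset.univ.image F, ?_, ?_⟩
  · simp [Finset.card_image_of_injective _ hinj, sq]
  · rw [Finset.coe_image, hinj.injOn.pairwise_image]
    exact fun p _ q _ hpq => hagree hpq

end IsAffinePlane

/-- if there exist `n+1` mutually unbiased orthonormal bases of `ℂ^n` and an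
affine plane of order `n`, then there is an orthonormal basis `{ψ_f : f ∈ S}` of
`ℂ^n ⊗ ℂ^n`, indexed by a set `S` of `n²` functions `{0,…,n} → {1,…,n}`, such that
`⟨v_{a,b} ⊗ conj v_{a,b}, ψ_f⟩ ≠ 0` implies `f a = b` for all `a`, `b` and `f ∈ S`. -/
theorem exists_onb_psiState_reconstruction
    (n : ℕ) (hn : 1 ≤ n)
    (v : Fin (n + 1) → Fin n → EuclideanSpace ℂ (Fin n))
    (horth : ∀ a, Orthonormal ℂ (v a))
    (hmub : ∀ a a', a ≠ a' → ∀ b b', ‖⟪v a b, v a' b'⟫‖ ^ 2 = 1 / n)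
    (L : Fin (n + 1) → Finset (Finset (Fin n × Fin n)))
    (hL : IsAffinePlane n L) :
    ∃ S : Finset (Fin (n + 1) → Fin n), S.card = n ^ 2 ∧
      (∃ ob : OrthonormalBasis {f // f ∈ S} ℂ (EuclideanSpace ℂ (Fin n × Fin n)),
        ∀ f : {f // f ∈ S}, ob f = psiState v f.1) ∧
      ∀ a : Fin (n + 1), ∀ b : Fin n, ∀ f ∈ S,
        ⟪tensConj (v a b) (v a b), psiState v f⟫ ≠ 0 → f a = b := by
  obtain ⟨S, hcard, hagree⟩ := hL.exists_finset_pairwise_existsUnique_eq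
  have hon : Orthonormal ℂ fun f : S => psiState v f.1 :=
    orthonormal_psiState horth hmub fun f g hfg =>
      hagree f.2 g.2 (Subtype.coe_ne_coe.2 hfg)
  obtain ⟨ob, hob⟩ := exists_orthonormalBasis_coe_eq hon (by simp [hcard, sq])
  refine ⟨S, hcard, ⟨ob, congrFun hob⟩, fun a b f _ hinner => ?_⟩
  by_contra hne
  exact hinner (by rw [inner_tensConj_psiState horth hmub, if_neg hne, mul_zero])
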